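/- Let d ≥ 2, p ≥ 1, s ∈ (0,1) with sp > 1. There exists C = C(d, p, s), independent of ϑ, such that for all ϑ ∈ (0,1], all M > 0, and all Lipschitz u on the closure of ℝ^d_{M+} with u(·, 0) = 0, ∫_{ℝ^d_{M+}} |u(x)|^p / x_d^{ps} dx ≤ C ( ϑ^{ps-p} |u|^p_{𝔚^{s,p}_ϑ(ℝ^d_{M+})} + M^{-ps} ‖u‖^p_{L^p(ℝ^d_{M+})} ). -/

import Mathlib

open MeasureTheory
open scoped ENNReal NNReal

/-- The localized nonlocal seminorm (to the `p`-th power) on the stripe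
`ℝ^{d-1} × (0,M]` with horizon parameter `τ`. -/
noncomputable def stripeSemi (d : ℕ) (S : Set ℝ) (τ p s : ℝ)
    (u : EuclideanSpace ℝ (Fin (d - 1)) → ℝ → ℝ) : ℝ≥0∞ :=
  ∫⁻ x' : EuclideanSpace ℝ (Fin (d - 1)), ∫⁻ xd in S,
    ∫⁻ y' : EuclideanSpace ℝ (Fin (d - 1)),
      ∫⁻ yd in S ∩ {t : ℝ | dist y' x' ^ 2 + (t - xd) ^ 2 < (τ * xd) ^ 2},
        ENNReal.ofReal (|u y' yd - u x' xd| ^ p / (τ * xd) ^ ((d : ℝ) + p * s))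

/-- The `L^p` norm (to the `p`-th power) on the stripe `ℝ^{d-1} × (0,M]`. -/
noncomputable def stripeLp (d : ℕ) (S : Set ℝ) (p : ℝ)
    (u : EuclideanSpace ℝ (Fin (d - 1)) → ℝ → ℝ) : ℝ≥0∞ :=
  ∫⁻ x' : EuclideanSpace ℝ (Fin (d - 1)), ∫⁻ xd in S, ENNReal.ofReal (|u x' xd| ^ p)

/-!
For `η` with `-1 < η.2 < 0` the shear `T q = q + q.2 • η` multiplies heights by `β = 1 + η.2 < 1`
and pushes the measure `μ = t ^ (-σ) dx dt`, `σ = p s`, to at most `β ^ (σ - 1)` times itself. The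
orbits of `T` descend to the boundary, where `u` vanishes, so `u = ∑ k, (u - u ∘ T) ∘ T^[k]`; as
`σ > 1`, a geometric series gives `‖u‖ ≤ (1 - β ^ ((σ - 1) / p))⁻¹ ‖u - u ∘ T‖` in `L^p(μ)`. With
`η = ϑ • ξ` the gap is at least a multiple of `ϑ`, which is the origin of `ϑ ^ (-p)`. Averaging over
the directions `ξ` in a lower cap of the unit ball and substituting `y = q + ϑ q.2 ξ` turns the
right-hand side into the nonlocal seminorm; the Jacobian leaves the factor `ϑ ^ (p s)`.
-/

open scoped Topology

section Telescoping

variable {α F : Type*} [MeasurableSpace α] {μ : Measure α} [NormedAddCommGroup F]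
  {T : α → α} {c p : ℝ≥0∞} {f : α → F}

theorem eLpNorm_comp_le_of_map_le_smul (hT : Measurable T) (hc : μ.map T ≤ c • μ)
    (hf : AEStronglyMeasurable f μ) :
    eLpNorm (f ∘ T) p μ ≤ c ^ (1 / p).toReal * eLpNorm f p μ := by
  have hf' : AEStronglyMeasurable f (μ.map T) :=
    hf.mono_ac (Measure.absolutelyContinuous_of_le_smul hc)
  rw [← eLpNorm_map_measure hf' hT.aemeasurable]
  exact (eLpNorm_mono_measure f hc).trans (eLpNorm_smul_measure_le c f p μ)

theorem eLpNorm_comp_iterate_le_of_map_le_smul (hT : Measurable T) (hc : μ.map T ≤ c • μ)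
    (hf : AEStronglyMeasurable f μ) (n : ℕ) :
    eLpNorm (f ∘ T^[n]) p μ ≤ (c ^ (1 / p).toReal) ^ n * eLpNorm f p μ := by
  have hqmp : Measure.QuasiMeasurePreserving T μ μ :=
    ⟨hT, Measure.absolutelyContinuous_of_le_smul hc⟩
  induction n with
  | zero => simp
  | succ n ih =>
    rw [Function.iterate_succ, ← Function.comp_assoc, pow_succ', mul_assoc]
    exact (eLpNorm_comp_le_of_map_le_smul hT hc
      (hf.comp_quasiMeasurePreserving (hqmp.iterate n))).trans (by gcongr)

theorem eLpNorm_le_mul_eLpNorm_sub_comp (hT : Measurable T) (hc : μ.map T ≤ c • μ)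
    (hf : AEStronglyMeasurable f μ) (hp : 1 ≤ p)
    (hlim : ∀ᵐ a ∂μ, Filter.Tendsto (fun n => f (T^[n] a)) Filter.atTop (𝓝 0)) :
    eLpNorm f p μ ≤ (1 - c ^ (1 / p).toReal)⁻¹ * eLpNorm (f - f ∘ T) p μ := by
  have hqmp : Measure.QuasiMeasurePreserving T μ μ :=
    ⟨hT, Measure.absolutelyContinuous_of_le_smul hc⟩
  have hmeas (n : ℕ) : AEStronglyMeasurable (f ∘ T^[n]) μ :=
    hf.comp_quasiMeasurePreserving (hqmp.iterate n)
  have hdiff : AEStronglyMeasurable (f - f ∘ T) μ := hf.sub (hmeas 1)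
  have telescope (n : ℕ) : f - f ∘ T^[n] = ∑ k ∈ Finset.range n, (f - f ∘ T) ∘ T^[k] := by
    simp only [Pi.sub_comp, Function.comp_assoc, ← Function.iterate_succ']
    exact (Finset.sum_range_sub' (fun k => f ∘ T^[k]) n).symm
  have partial_le (n : ℕ) : eLpNorm (f - f ∘ T^[n]) p μ ≤
      (1 - c ^ (1 / p).toReal)⁻¹ * eLpNorm (f - f ∘ T) p μ := by
    calc eLpNorm (f - f ∘ T^[n]) p μ
        ≤ ∑ k ∈ Finset.range n, eLpNorm ((f - f ∘ T) ∘ T^[k]) p μ := by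
          rw [telescope]
          exact eLpNorm_sum_le
            (fun k _ => hdiff.comp_quasiMeasurePreserving (hqmp.iterate k)) hp
      _ ≤ ∑ k ∈ Finset.range n, (c ^ (1 / p).toReal) ^ k * eLpNorm (f - f ∘ T) p μ := by
          gcongr with k
          exact eLpNorm_comp_iterate_le_of_map_le_smul hT hc hdiff k
      _ ≤ (∑' k, (c ^ (1 / p).toReal) ^ k) * eLpNorm (f - f ∘ T) p μ := by
          rw [← Finset.sum_mul]
          gcongr
          exact ENNReal.sum_le_tsum _
      _ = (1 - c ^ (1 / p).toReal)⁻¹ * eLpNorm (f - f ∘ T) p μ := by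
          rw [ENNReal.tsum_geometric]
  have hlim' : ∀ᵐ a ∂μ,
      Filter.Tendsto (fun n => (f - f ∘ T^[n]) a) Filter.atTop (𝓝 (f a)) := by
    filter_upwards [hlim] with a ha
    simpa using ha.const_sub (f a)
  exact (Lp.eLpNorm_lim_le_liminf_eLpNorm (fun n => hf.sub (hmeas n)) f hlim').trans
    (Filter.liminf_le_of_frequently_le' (.of_forall partial_le))

end Telescoping

theorem min_mul_le_one_sub_rpow {a x : ℝ} (ha : 0 ≤ a) (hx0 : 0 ≤ x) (hx1 : x ≤ 1) :
    min a 1 * x ≤ 1 - (1 - x) ^ a := by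
  have bernoulli : (1 + -x) ^ min a 1 ≤ 1 + min a 1 * -x :=
    rpow_one_add_le_one_add_mul_self (by linarith) (by positivity) (min_le_right a 1)
  have hmono : (1 - x) ^ a ≤ (1 - x) ^ min a 1 :=
    Real.rpow_le_rpow_of_exponent_ge' (by linarith) (by linarith) (by positivity)
      (min_le_left a 1)
  rw [← sub_eq_add_neg] at bernoulli
  linarith

theorem stronglyMeasurable_indicator_of_continuousOn {X F : Type*} [TopologicalSpace X]
    [MeasurableSpace X] [OpensMeasurableSpace X] [SecondCountableTopology X]
    [TopologicalSpace F] [TopologicalSpace.PseudoMetrizableSpace F] [Zero F] {A : Set X}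
    {f : X → F} (hA : MeasurableSet A) (hf : ContinuousOn f A) :
    StronglyMeasurable (A.indicator f) := by
  refine stronglyMeasurable_of_restrict_of_restrict_compl hA
    (hf.congr Set.eqOn_indicator).domRestrict.stronglyMeasurable
    (stronglyMeasurable_const' fun x y => ?_)
  rw [Set.domRestrict_apply, Set.domRestrict_apply, Set.indicator_of_notMem x.2,
    Set.indicator_of_notMem y.2]

section HardyMeasure

/-- The measure `t ^ (-σ) dx dt` on the stripe `E × S`, for which the left-hand side of the Hardy
inequality is the `p`-th power of an `L^p` norm. -/
noncomputable def hardyMeasure (E : Type*) [MeasureSpace E] (S : Set ℝ) (σ : ℝ) :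
    Measure (E × ℝ) :=
  (volume.restrict (Set.univ ×ˢ S)).withDensity fun q => ENNReal.ofReal (q.2 ^ (-σ))

variable {E F : Type*} [MeasureSpace E] [NormedAddCommGroup F] {S : Set ℝ} {u : E × ℝ → F}
  {p σ : ℝ}

theorem hardyMeasure_apply (hS : MeasurableSet S) {A : Set (E × ℝ)} (hA : MeasurableSet A) :
    hardyMeasure E S σ A =
      ∫⁻ q, ((Set.univ ×ˢ S) ∩ A).indicator (fun q => ENNReal.ofReal (q.2 ^ (-σ))) q := by
  rw [hardyMeasure, withDensity_apply _ hA, Measure.restrict_restrict hA, Set.inter_comm,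
    lintegral_indicator ((MeasurableSet.univ.prod hS).inter hA)]

theorem eLpNorm_hardyMeasure_rpow (hp : 0 < p) (hS : MeasurableSet S) (hpos : ∀ t ∈ S, 0 < t)
    (hu : StronglyMeasurable u) :
    eLpNorm u (ENNReal.ofReal p) (hardyMeasure E S σ) ^ p =
      ∫⁻ q in Set.univ ×ˢ S, ENNReal.ofReal (‖u q‖ ^ p / q.2 ^ σ) := by
  rw [eLpNorm_eq_lintegral_rpow_enorm_toReal (by simpa using hp) ENNReal.ofReal_ne_top,
    ENNReal.toReal_ofReal hp.le, one_div, ENNReal.rpow_inv_rpow hp.ne', hardyMeasure,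
    lintegral_withDensity_eq_lintegral_mul _ (by fun_prop) (by fun_prop)]
  refine setLIntegral_congr_fun (MeasurableSet.univ.prod hS) fun q hq => ?_
  have hq0 : 0 < q.2 := hpos q.2 hq.2
  rw [Pi.mul_apply, ← ofReal_norm, ENNReal.ofReal_rpow_of_nonneg (norm_nonneg _) hp.le,
    ← ENNReal.ofReal_mul (by positivity), Real.rpow_neg hq0.le, mul_comm, div_eq_mul_inv]

end HardyMeasure

section Shear

/-- `S` is an initial segment of `(0, ∞)`, such as `(0, M]` or `(0, ∞)` itself: the set of heights
of a stripe or of the half-space. -/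
structure IsStripeHeights (S : Set ℝ) : Prop where
  pos : ∀ t ∈ S, 0 < t
  Ioc_subset : ∀ t ∈ S, Set.Ioc 0 t ⊆ S

theorem isStripeHeights_Ioc (M : ℝ) : IsStripeHeights (Set.Ioc 0 M) :=
  ⟨fun _ ht => ht.1, fun _ ht => Set.Ioc_subset_Ioc_right ht.2⟩

theorem IsStripeHeights.measurableSet {S : Set ℝ} (hS : IsStripeHeights S) : MeasurableSet S :=
  Set.OrdConnected.measurableSet
    ⟨fun a ha _ hb _ hc => hS.Ioc_subset _ hb ⟨(hS.pos a ha).trans_le hc.1, hc.2⟩⟩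

variable {E : Type*} [NormedAddCommGroup E] [NormedSpace ℝ E]

/-- The linear map of `E × ℝ` that fixes the boundary `E × {0}` and displaces each point by its
height times `η`. For `-1 < η.2 < 0` it contracts heights by the factor `1 + η.2`. -/
def shear (η q : E × ℝ) : E × ℝ :=
  q + q.2 • η

theorem shear_snd (η q : E × ℝ) : (shear η q).2 = (1 + η.2) * q.2 := by
  simp only [shear, Prod.snd_add, Prod.smul_snd, smul_eq_mul]
  ring

theorem continuous_shear (η : E × ℝ) : Continuous (shear η) := by
  unfold shear
  fun_prop

theorem iterate_shear {η : E × ℝ} (hη : η.2 ≠ 0) (q : E × ℝ) (n : ℕ) :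
    (shear η)^[n] q = q + (((1 + η.2) ^ n - 1) / η.2 * q.2) • η := by
  induction n with
  | zero => simp
  | succ n ih =>
    rw [Function.iterate_succ_apply', ih, shear, add_assoc, ← add_smul]
    congr 2
    simp only [Prod.snd_add, Prod.smul_snd, smul_eq_mul]
    field_simp
    ring

theorem tendsto_iterate_shear {η : E × ℝ} (hη : η.2 ∈ Set.Ioo (-1) 0) (q : E × ℝ) :
    Filter.Tendsto (fun n => (shear η)^[n] q) Filter.atTop
      (𝓝 (q.1 - (q.2 / η.2) • η.1, 0)) := by
  have hpow : Filter.Tendsto (fun n : ℕ => (1 + η.2) ^ n) Filter.atTop (𝓝 0) :=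
    tendsto_pow_atTop_nhds_zero_of_lt_one (by linarith [hη.1]) (by linarith [hη.2])
  have hlim : (q.1 - (q.2 / η.2) • η.1, (0 : ℝ)) = q + ((0 - 1) / η.2 * q.2) • η := by
    ext
    · simp [sub_eq_add_neg, div_eq_inv_mul]
    · have := hη.2.ne
      simp only [Prod.snd_add, Prod.smul_snd, smul_eq_mul]
      field_simp
      ring
  simp only [iterate_shear hη.2.ne, hlim]
  exact ((((hpow.sub_const 1).div_const η.2).mul_const q.2).smul_const η).const_add q

variable {S : Set ℝ}

theorem shear_mem_univ_prod {η q : E × ℝ} (hη : η.2 ∈ Set.Ioo (-1) 0) (hS : IsStripeHeights S)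
    (hq : q ∈ Set.univ ×ˢ S) :
    shear η q ∈ Set.univ ×ˢ S := by
  have hq0 : 0 < q.2 := hS.pos q.2 hq.2
  refine ⟨Set.mem_univ _, hS.Ioc_subset q.2 hq.2 ?_⟩
  rw [shear_snd]
  exact ⟨mul_pos (by linarith [hη.1]) hq0, by nlinarith [hη.2]⟩

theorem tendsto_comp_iterate_shear {F : Type*} [TopologicalSpace F] {u : E × ℝ → F} {b : F}
    {η q : E × ℝ} (hη : η.2 ∈ Set.Ioo (-1) 0) (hS : IsStripeHeights S)
    (htrace : ∀ x, Filter.Tendsto u (𝓝[Set.univ ×ˢ S] (x, 0)) (𝓝 b))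
    (hq : q ∈ Set.univ ×ˢ S) :
    Filter.Tendsto (fun n => u ((shear η)^[n] q)) Filter.atTop (𝓝 b) := by
  have hmaps : Set.MapsTo (shear η) (Set.univ ×ˢ S) (Set.univ ×ˢ S) :=
    fun _ => shear_mem_univ_prod hη hS
  exact (htrace _).comp (tendsto_nhdsWithin_iff.2
    ⟨tendsto_iterate_shear hη q, .of_forall fun n => hmaps.iterate n hq⟩)

variable [FiniteDimensional ℝ E] [MeasureSpace E] [BorelSpace E]
  [(volume : Measure E).IsAddHaarMeasure]

theorem map_shear_volume {η : E × ℝ} (hη : -1 < η.2) :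
    (volume : Measure (E × ℝ)).map (shear η) = ENNReal.ofReal (1 + η.2)⁻¹ • volume := by
  have hβ : 0 < 1 + η.2 := by linarith
  have hheight : MeasurePreserving (fun t : ℝ => (1 + η.2) * t) volume
      (ENNReal.ofReal (1 + η.2)⁻¹ • volume) :=
    ⟨by fun_prop, by rw [Real.map_volume_mul_left hβ.ne', abs_of_pos (inv_pos.2 hβ)]⟩
  have hskew := hheight.skew_product (μc := (volume : Measure E)) (μd := volume)
    (g := fun t x => x + t • η.1) (by fun_prop)
    (.of_forall fun t => (measurePreserving_add_right volume (t • η.1)).map_eq)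
  have hswap := (Measure.measurePreserving_swap.comp hskew).comp
    (Measure.measurePreserving_swap (μ := (volume : Measure E)) (ν := (volume : Measure ℝ)))
  have hshear : shear η = (Prod.swap ∘ fun p : ℝ × E => ((1 + η.2) * p.1, p.2 + p.1 • η.1)) ∘
      Prod.swap := by
    funext q
    exact Prod.ext rfl (shear_snd η q)
  rw [hshear, Measure.volume_eq_prod]
  exact hswap.map_eq.trans (Measure.prod_smul_right _)

theorem map_shear_hardyMeasure_le {η : E × ℝ} {σ : ℝ} (hη : η.2 ∈ Set.Ioo (-1) 0)
    (hS : IsStripeHeights S) :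
    (hardyMeasure E S σ).map (shear η) ≤
      ENNReal.ofReal ((1 + η.2) ^ (σ - 1)) • hardyMeasure E S σ := by
  have hβ : 0 < 1 + η.2 := by linarith [hη.1]
  have hstripe : MeasurableSet (Set.univ ×ˢ S : Set (E × ℝ)) :=
    MeasurableSet.univ.prod hS.measurableSet
  have hshear : Measurable (shear η) := (continuous_shear η).measurable
  refine Measure.le_intro fun A hA _ => ?_
  set w : E × ℝ → ℝ≥0∞ :=
    ((Set.univ ×ˢ S) ∩ A).indicator fun q => ENNReal.ofReal (q.2 ^ (-σ)) with hw
  have hwm : Measurable w := Measurable.indicator (by fun_prop) (hstripe.inter hA)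
  calc (hardyMeasure E S σ).map (shear η) A
      ≤ ∫⁻ q, ENNReal.ofReal ((1 + η.2) ^ σ) * w (shear η q) := by
        rw [Measure.map_apply hshear hA, hardyMeasure_apply hS.measurableSet (hshear hA)]
        refine lintegral_mono fun q => Set.indicator_apply_le' (fun h => ?_) fun _ => zero_le
        obtain ⟨hq, hqA⟩ := h
        have hq0 : 0 < q.2 := hS.pos q.2 hq.2
        have hmem : shear η q ∈ (Set.univ ×ˢ S) ∩ A := ⟨shear_mem_univ_prod hη hS hq, hqA⟩
        rw [hw, Set.indicator_of_mem hmem, shear_snd,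
          ← ENNReal.ofReal_mul (by positivity), Real.mul_rpow hβ.le hq0.le, ← mul_assoc,
          ← Real.rpow_add hβ, add_neg_cancel, Real.rpow_zero, one_mul]
    _ = ENNReal.ofReal ((1 + η.2) ^ σ) * (ENNReal.ofReal (1 + η.2)⁻¹ * ∫⁻ q, w q) := by
        rw [lintegral_const_mul _ (by fun_prop), ← lintegral_map hwm hshear,
          map_shear_volume hη.1, lintegral_smul_measure, smul_eq_mul]
    _ = (ENNReal.ofReal ((1 + η.2) ^ (σ - 1)) • hardyMeasure E S σ) A := by
        rw [Measure.smul_apply, hardyMeasure_apply hS.measurableSet hA, ← mul_assoc,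
          ← ENNReal.ofReal_mul (by positivity), ← div_eq_mul_inv, Real.rpow_sub_one hβ.ne',
          smul_eq_mul]

variable {F : Type*} [NormedAddCommGroup F] {u : E × ℝ → F} {p σ : ℝ}

theorem lintegral_norm_rpow_div_le_shear {η : E × ℝ} (hη : η.2 ∈ Set.Ioo (-1) 0) (hp : 1 ≤ p)
    (hσ : 1 < σ) (hS : IsStripeHeights S) (hu : StronglyMeasurable u)
    (htrace : ∀ x, Filter.Tendsto u (𝓝[Set.univ ×ˢ S] (x, 0)) (𝓝 0)) :
    ∫⁻ q in Set.univ ×ˢ S, ENNReal.ofReal (‖u q‖ ^ p / q.2 ^ σ) ≤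
      ENNReal.ofReal ((1 - (1 + η.2) ^ ((σ - 1) / p)) ^ (-p)) *
        ∫⁻ q in Set.univ ×ˢ S, ENNReal.ofReal (‖u (shear η q) - u q‖ ^ p / q.2 ^ σ) := by
  have hp0 : 0 < p := by linarith
  have hβ : 0 < 1 + η.2 := by linarith [hη.1]
  have hshear : Measurable (shear η) := (continuous_shear η).measurable
  have hlt : (1 + η.2) ^ ((σ - 1) / p) < 1 :=
    Real.rpow_lt_one hβ.le (by linarith [hη.2]) (div_pos (by linarith) hp0)
  have hlim : ∀ᵐ q ∂hardyMeasure E S σ,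
      Filter.Tendsto (fun n => u ((shear η)^[n] q)) Filter.atTop (𝓝 0) :=
    (withDensity_absolutelyContinuous _ _).ae_le <|
      (ae_restrict_mem (MeasurableSet.univ.prod hS.measurableSet)).mono fun _ =>
        tendsto_comp_iterate_shear hη hS htrace
  have hcontract := eLpNorm_le_mul_eLpNorm_sub_comp (p := ENNReal.ofReal p) hshear
    (map_shear_hardyMeasure_le hη hS) hu.aestronglyMeasurable
    (ENNReal.one_le_ofReal.2 hp) hlim
  have hratio : ENNReal.ofReal ((1 + η.2) ^ (σ - 1)) ^ (1 / ENNReal.ofReal p).toReal =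
      ENNReal.ofReal ((1 + η.2) ^ ((σ - 1) / p)) := by
    rw [ENNReal.ofReal_rpow_of_nonneg (by positivity) (by positivity), ← Real.rpow_mul hβ.le,
      one_div, ENNReal.toReal_inv, ENNReal.toReal_ofReal hp0.le, div_eq_mul_inv]
  have hpow := ENNReal.rpow_le_rpow hcontract hp0.le
  rw [hratio, ← ENNReal.ofReal_one, ← ENNReal.ofReal_sub _ (by positivity),
    ← ENNReal.ofReal_inv_of_pos (by linarith), ENNReal.mul_rpow_of_nonneg _ _ hp0.le,
    ENNReal.ofReal_rpow_of_nonneg (inv_nonneg.2 (by linarith)) hp0.le,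
    Real.inv_rpow (by linarith), ← Real.rpow_neg (by linarith), eLpNorm_sub_comm,
    eLpNorm_hardyMeasure_rpow hp0 hS.measurableSet hS.pos hu,
    eLpNorm_hardyMeasure_rpow hp0 hS.measurableSet hS.pos
      ((hu.comp_measurable hshear).sub hu)] at hpow
  exact hpow

end Shear

section HorizonSemi

variable {E F : Type*} [NormedAddCommGroup E] [NormedAddCommGroup F]

/-- The Euclidean ball of radius `ϑ x_d` around `x`, over which the nonlocal seminorm integrates.
It is written out because the distance of `E × ℝ` comes from the sup norm. -/
def horizonBall (ϑ : ℝ) (x : E × ℝ) : Set (E × ℝ) :=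
  {y | dist y.1 x.1 ^ 2 + (y.2 - x.2) ^ 2 < (ϑ * x.2) ^ 2}

theorem isOpen_horizonBall (ϑ : ℝ) (x : E × ℝ) : IsOpen (horizonBall ϑ x) :=
  isOpen_lt (by fun_prop) continuous_const

variable [NormedSpace ℝ E] [MeasureSpace E]

/-- The localized nonlocal seminorm (to the `p`-th power) over the stripe `E × S`, with
differentiability order `σ / p`; `Module.finrank ℝ E + 1` is the dimension of the stripe. -/
noncomputable def horizonSemi (S : Set ℝ) (ϑ p σ : ℝ) (u : E × ℝ → F) : ℝ≥0∞ :=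
  ∫⁻ q in Set.univ ×ˢ S, ∫⁻ y in (Set.univ ×ˢ S) ∩ horizonBall ϑ q,
    ENNReal.ofReal (‖u y - u q‖ ^ p / (ϑ * q.2) ^ (Module.finrank ℝ E + 1 + σ))

theorem horizonSemi_congr [BorelSpace E] {S : Set ℝ} {ϑ p σ : ℝ} {u v : E × ℝ → F}
    (hS : MeasurableSet S) (huv : Set.EqOn u v (Set.univ ×ˢ S)) :
    horizonSemi S ϑ p σ u = horizonSemi S ϑ p σ v := by
  have hstripe : MeasurableSet (Set.univ ×ˢ S : Set (E × ℝ)) := MeasurableSet.univ.prod hS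
  refine setLIntegral_congr_fun hstripe fun q hq => ?_
  refine setLIntegral_congr_fun (hstripe.inter (isOpen_horizonBall ϑ q).measurableSet)
    fun y hy => ?_
  simp only [huv hq, huv hy.1]

end HorizonSemi

section Averaging

theorem lintegral_eq_ofReal_pow_mul_lintegral_add_smul {V : Type*} [NormedAddCommGroup V]
    [NormedSpace ℝ V] [FiniteDimensional ℝ V] [MeasurableSpace V] [BorelSpace V]
    (μ : Measure V) [μ.IsAddHaarMeasure] (x : V) {R : ℝ} (hR : 0 < R) (f : V → ℝ≥0∞) :
    ∫⁻ y, f y ∂μ = ENNReal.ofReal (R ^ Module.finrank ℝ V) * ∫⁻ z, f (x + R • z) ∂μ := by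
  have hscale : ∫⁻ z, f (x + R • z) ∂μ =
      ENNReal.ofReal (R ^ Module.finrank ℝ V)⁻¹ * ∫⁻ y, f y ∂μ := by
    have hmap := lintegral_map_equiv (μ := μ) (fun y => f (x + y))
      (Homeomorph.smulOfNeZero R hR.ne').toMeasurableEquiv
    rw [← lintegral_add_left_eq_self f x, ← smul_eq_mul, ← abs_of_pos (inv_pos.2 (pow_pos hR _)),
      ← lintegral_smul_measure, ← Measure.map_addHaar_smul μ hR.ne']
    exact hmap.symm
  rw [hscale, ← mul_assoc, ← ENNReal.ofReal_mul (by positivity),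
    mul_inv_cancel₀ (by positivity), ENNReal.ofReal_one, one_mul]

variable {E : Type*} [NormedAddCommGroup E]

/-- The directions in the Euclidean unit ball that descend by more than `1 / 2`: shearing along
`ϑ • ξ` with `ξ` in this cap contracts heights by a factor in `(0, 1 - ϑ / 2)`. -/
def lowerCap (E : Type*) [NormedAddCommGroup E] : Set (E × ℝ) :=
  {ξ | ‖ξ.1‖ ^ 2 + ξ.2 ^ 2 < 1 ∧ ξ.2 < -(1 / 2)}

theorem isOpen_lowerCap : IsOpen (lowerCap E) :=
  .and (isOpen_lt (by fun_prop) continuous_const) (isOpen_lt continuous_snd continuous_const)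

theorem volume_lowerCap_pos [MeasureSpace E] [(volume : Measure E).IsAddHaarMeasure] :
    0 < volume (lowerCap E) :=
  isOpen_lowerCap.measure_pos volume ⟨(0, -(3 / 4)), by norm_num [lowerCap]⟩

theorem neg_one_lt_of_mem_lowerCap {ξ : E × ℝ} (hξ : ξ ∈ lowerCap E) : -1 < ξ.2 := by
  nlinarith [hξ.1, sq_nonneg ‖ξ.1‖]

variable [NormedSpace ℝ E] {S : Set ℝ} {ϑ : ℝ}

theorem smul_snd_mem_Ioo_of_mem_lowerCap {ξ : E × ℝ} (hξ : ξ ∈ lowerCap E) (hϑ0 : 0 < ϑ)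
    (hϑ1 : ϑ ≤ 1) : (ϑ • ξ).2 ∈ Set.Ioo (-1) 0 := by
  have hlt := neg_one_lt_of_mem_lowerCap hξ
  have hξ2 := hξ.2
  simp only [Prod.smul_snd, smul_eq_mul]
  constructor <;> nlinarith

theorem shear_mem_horizonBall {ξ q : E × ℝ} (hξ : ξ ∈ lowerCap E) (hϑ : 0 < ϑ) (hq : 0 < q.2) :
    shear (ϑ • ξ) q ∈ horizonBall ϑ q := by
  have hR : 0 < (ϑ * q.2) ^ 2 := by positivity
  simp only [horizonBall, shear, Set.mem_ofPred_eq, Prod.fst_add, Prod.snd_add, Prod.smul_fst,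
    Prod.smul_snd, dist_self_add_left, norm_smul, add_sub_cancel_left, smul_eq_mul,
    Real.norm_of_nonneg hϑ.le, Real.norm_of_nonneg hq.le]
  calc (q.2 * (ϑ * ‖ξ.1‖)) ^ 2 + (q.2 * (ϑ * ξ.2)) ^ 2
      = (ϑ * q.2) ^ 2 * (‖ξ.1‖ ^ 2 + ξ.2 ^ 2) := by ring
    _ < (ϑ * q.2) ^ 2 := mul_lt_of_lt_one_right hR hξ.1

variable [FiniteDimensional ℝ E] [MeasureSpace E] [(volume : Measure E).IsAddHaarMeasure]

theorem volume_lowerCap_lt_top : volume (lowerCap E) < ∞ := by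
  have hsub : lowerCap E ⊆ Metric.closedBall 0 1 := fun ξ hξ => by
    rw [mem_closedBall_zero_iff, Prod.norm_def, max_le_iff, Real.norm_eq_abs, abs_le]
    have := hξ.1
    have := norm_nonneg ξ.1
    refine ⟨?_, ?_, ?_⟩ <;> nlinarith [hξ.2]
  exact (Metric.isBounded_closedBall.subset hsub).measure_lt_top

variable [BorelSpace E]

theorem ofReal_pow_mul_setLIntegral_lowerCap_le {q : E × ℝ} (hϑ0 : 0 < ϑ) (hϑ1 : ϑ ≤ 1)
    (hS : IsStripeHeights S) (hq : q ∈ Set.univ ×ˢ S) (f : E × ℝ → ℝ≥0∞) :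
    ENNReal.ofReal ((ϑ * q.2) ^ (Module.finrank ℝ E + 1)) *
        ∫⁻ ξ in lowerCap E, f (shear (ϑ • ξ) q) ≤
      ∫⁻ y in (Set.univ ×ˢ S) ∩ horizonBall ϑ q, f y := by
  have : (volume : Measure (E × ℝ)).IsAddHaarMeasure := Measure.prod.instIsAddHaarMeasure _ _
  have hq0 : 0 < q.2 := hS.pos q.2 hq.2
  have hball : MeasurableSet ((Set.univ ×ˢ S) ∩ horizonBall ϑ q) :=
    (MeasurableSet.univ.prod hS.measurableSet).inter (isOpen_horizonBall ϑ q).measurableSet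
  rw [← lintegral_indicator hball,
    lintegral_eq_ofReal_pow_mul_lintegral_add_smul volume q (mul_pos hϑ0 hq0),
    Module.finrank_prod, Module.finrank_self, ← lintegral_indicator isOpen_lowerCap.measurableSet]
  gcongr with ξ
  refine Set.indicator_apply_le' (fun hξ => ?_) fun _ => zero_le
  have hη := smul_snd_mem_Ioo_of_mem_lowerCap hξ hϑ0 hϑ1
  have hshear : q + (ϑ * q.2) • ξ = shear (ϑ • ξ) q := by
    rw [shear, smul_smul, mul_comm]
  have hmem : shear (ϑ • ξ) q ∈ (Set.univ ×ˢ S) ∩ horizonBall ϑ q :=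
    ⟨shear_mem_univ_prod hη hS hq, shear_mem_horizonBall hξ hϑ0 hq0⟩
  rw [hshear, Set.indicator_of_mem hmem]

variable {F : Type*} [NormedAddCommGroup F] {u : E × ℝ → F} {p σ : ℝ}

theorem lintegral_lowerCap_shear_le_horizonSemi (hϑ0 : 0 < ϑ) (hϑ1 : ϑ ≤ 1)
    (hS : IsStripeHeights S) (hu : StronglyMeasurable u) :
    ∫⁻ ξ in lowerCap E, ∫⁻ q in Set.univ ×ˢ S,
        ENNReal.ofReal (‖u (shear (ϑ • ξ) q) - u q‖ ^ p / q.2 ^ σ) ≤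
      ENNReal.ofReal (ϑ ^ σ) * horizonSemi S ϑ p σ u := by
  have hshear : Continuous fun z : (E × ℝ) × (E × ℝ) => shear (ϑ • z.1) z.2 := by
    unfold shear
    fun_prop
  have hnorm : Measurable fun z : (E × ℝ) × (E × ℝ) => ‖u (shear (ϑ • z.1) z.2) - u z.2‖ :=
    ((hu.comp_measurable hshear.measurable).sub (hu.comp_measurable measurable_snd)).norm.measurable
  rw [lintegral_lintegral_swap (by fun_prop), horizonSemi,
    ← lintegral_const_mul' _ _ ENNReal.ofReal_ne_top]
  refine setLIntegral_mono' (MeasurableSet.univ.prod hS.measurableSet) fun q hq => ?_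
  have hq0 : 0 < q.2 := hS.pos q.2 hq.2
  have hR : 0 < ϑ * q.2 := mul_pos hϑ0 hq0
  have hscale (ξ : E × ℝ) : ENNReal.ofReal (‖u (shear (ϑ • ξ) q) - u q‖ ^ p / q.2 ^ σ) =
      ENNReal.ofReal (ϑ ^ σ) * (ENNReal.ofReal ((ϑ * q.2) ^ (Module.finrank ℝ E + 1)) *
        ENNReal.ofReal (‖u (shear (ϑ • ξ) q) - u q‖ ^ p /
          (ϑ * q.2) ^ (Module.finrank ℝ E + 1 + σ))) := by
    rw [← ENNReal.ofReal_mul (by positivity), ← ENNReal.ofReal_mul (by positivity),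
      Real.rpow_add hR, ← Nat.cast_add_one, Real.rpow_natCast, Real.mul_rpow hϑ0.le hq0.le]
    field_simp
  simp only [hscale, lintegral_const_mul' _ _ ENNReal.ofReal_ne_top]
  gcongr
  exact ofReal_pow_mul_setLIntegral_lowerCap_le hϑ0 hϑ1 hS hq _

theorem lintegral_norm_rpow_div_le_of_mem_lowerCap {ξ : E × ℝ} (hξ : ξ ∈ lowerCap E)
    (hp : 1 ≤ p) (hσ : 1 < σ) (hϑ0 : 0 < ϑ) (hϑ1 : ϑ ≤ 1) (hS : IsStripeHeights S)
    (hu : StronglyMeasurable u)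
    (htrace : ∀ x, Filter.Tendsto u (𝓝[Set.univ ×ˢ S] (x, 0)) (𝓝 0)) :
    ∫⁻ q in Set.univ ×ˢ S, ENNReal.ofReal (‖u q‖ ^ p / q.2 ^ σ) ≤
      ENNReal.ofReal ((min ((σ - 1) / p) 1 / 2 * ϑ) ^ (-p)) * ∫⁻ q in Set.univ ×ˢ S,
        ENNReal.ofReal (‖u (shear (ϑ • ξ) q) - u q‖ ^ p / q.2 ^ σ) := by
  have hexp : 0 < (σ - 1) / p := div_pos (by linarith) (by linarith)
  have hη := smul_snd_mem_Ioo_of_mem_lowerCap hξ hϑ0 hϑ1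
  have hgap : min ((σ - 1) / p) 1 / 2 * ϑ ≤ 1 - (1 + (ϑ • ξ).2) ^ ((σ - 1) / p) := by
    calc min ((σ - 1) / p) 1 / 2 * ϑ
        = min ((σ - 1) / p) 1 * (ϑ / 2) := by ring
      _ ≤ min ((σ - 1) / p) 1 * -(ϑ • ξ).2 := by
          rw [Prod.smul_snd, smul_eq_mul]
          gcongr
          nlinarith [hξ.2]
      _ ≤ 1 - (1 - -(ϑ • ξ).2) ^ ((σ - 1) / p) :=
          min_mul_le_one_sub_rpow hexp.le (by linarith [hη.2]) (by linarith [hη.1])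
      _ = 1 - (1 + (ϑ • ξ).2) ^ ((σ - 1) / p) := by rw [sub_neg_eq_add]
  refine (lintegral_norm_rpow_div_le_shear hη hp hσ hS hu htrace).trans ?_
  gcongr ENNReal.ofReal ?_ * _
  exact Real.rpow_le_rpow_of_nonpos (by positivity) hgap (by linarith)

theorem volume_lowerCap_mul_lintegral_le_horizonSemi (hp : 1 ≤ p) (hσ : 1 < σ) (hϑ0 : 0 < ϑ)
    (hϑ1 : ϑ ≤ 1) (hS : IsStripeHeights S) (hu : StronglyMeasurable u)
    (htrace : ∀ x, Filter.Tendsto u (𝓝[Set.univ ×ˢ S] (x, 0)) (𝓝 0)) :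
    volume (lowerCap E) * ∫⁻ q in Set.univ ×ˢ S, ENNReal.ofReal (‖u q‖ ^ p / q.2 ^ σ) ≤
      ENNReal.ofReal ((min ((σ - 1) / p) 1 / 2) ^ (-p)) *
        (ENNReal.ofReal (ϑ ^ (σ - p)) * horizonSemi S ϑ p σ u) := by
  set m : ℝ := min ((σ - 1) / p) 1
  have hm : 0 < m := lt_min (div_pos (by linarith) (by linarith)) one_pos
  calc volume (lowerCap E) * ∫⁻ q in Set.univ ×ˢ S, ENNReal.ofReal (‖u q‖ ^ p / q.2 ^ σ)
      = ∫⁻ _ in lowerCap E, ∫⁻ q in Set.univ ×ˢ S, ENNReal.ofReal (‖u q‖ ^ p / q.2 ^ σ) := by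
        rw [setLIntegral_const, mul_comm]
    _ ≤ ENNReal.ofReal ((m / 2 * ϑ) ^ (-p)) * ∫⁻ ξ in lowerCap E, ∫⁻ q in Set.univ ×ˢ S,
          ENNReal.ofReal (‖u (shear (ϑ • ξ) q) - u q‖ ^ p / q.2 ^ σ) := by
        rw [← lintegral_const_mul' _ _ ENNReal.ofReal_ne_top]
        exact setLIntegral_mono' isOpen_lowerCap.measurableSet fun ξ hξ =>
          lintegral_norm_rpow_div_le_of_mem_lowerCap hξ hp hσ hϑ0 hϑ1 hS hu htrace
    _ ≤ ENNReal.ofReal ((m / 2 * ϑ) ^ (-p)) *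
          (ENNReal.ofReal (ϑ ^ σ) * horizonSemi S ϑ p σ u) := by
        gcongr
        exact lintegral_lowerCap_shear_le_horizonSemi hϑ0 hϑ1 hS hu
    _ = ENNReal.ofReal ((m / 2) ^ (-p)) *
          (ENNReal.ofReal (ϑ ^ (σ - p)) * horizonSemi S ϑ p σ u) := by
        rw [Real.mul_rpow (half_pos hm).le hϑ0.le, sub_eq_neg_add, Real.rpow_add hϑ0,
          ENNReal.ofReal_mul (by positivity), ENNReal.ofReal_mul (by positivity), mul_assoc,
          mul_assoc]

theorem volume_lowerCap_mul_lintegral_le_horizonSemi_of_continuousOn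
    (hp : 1 ≤ p) (hσ : 1 < σ) (hϑ0 : 0 < ϑ) (hϑ1 : ϑ ≤ 1) (hS : IsStripeHeights S)
    (hu : ContinuousOn u (Set.univ ×ˢ insert 0 S)) (hzero : ∀ x, u (x, 0) = 0) :
    volume (lowerCap E) * ∫⁻ q in Set.univ ×ˢ S, ENNReal.ofReal (‖u q‖ ^ p / q.2 ^ σ) ≤
      ENNReal.ofReal ((min ((σ - 1) / p) 1 / 2) ^ (-p)) *
        (ENNReal.ofReal (ϑ ^ (σ - p)) * horizonSemi S ϑ p σ u) := by
  have hstripe : MeasurableSet (Set.univ ×ˢ S : Set (E × ℝ)) :=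
    MeasurableSet.univ.prod hS.measurableSet
  have hsub : (Set.univ ×ˢ S : Set (E × ℝ)) ⊆ Set.univ ×ˢ insert 0 S :=
    Set.prod_mono_right (Set.subset_insert 0 S)
  have heq : Set.EqOn ((Set.univ ×ˢ S).indicator u) u (Set.univ ×ˢ S) := Set.eqOn_indicator
  have hmeas : StronglyMeasurable ((Set.univ ×ˢ S).indicator u) :=
    stronglyMeasurable_indicator_of_continuousOn hstripe (hu.mono hsub)
  have htrace (x : E) : Filter.Tendsto ((Set.univ ×ˢ S).indicator u)
      (𝓝[Set.univ ×ˢ S] (x, 0)) (𝓝 0) := by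
    have hcont := (hu (x, 0) ⟨Set.mem_univ x, Set.mem_insert 0 S⟩).mono hsub
    rw [ContinuousWithinAt, hzero] at hcont
    exact hcont.congr' (heq.symm.eventuallyEq_of_mem self_mem_nhdsWithin)
  have hint : ∫⁻ q in Set.univ ×ˢ S, ENNReal.ofReal (‖u q‖ ^ p / q.2 ^ σ) =
      ∫⁻ q in Set.univ ×ˢ S,
        ENNReal.ofReal (‖(Set.univ ×ˢ S).indicator u q‖ ^ p / q.2 ^ σ) :=
    setLIntegral_congr_fun hstripe fun q hq => by simp only [heq hq]
  rw [hint, ← horizonSemi_congr hS.measurableSet heq]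
  exact volume_lowerCap_mul_lintegral_le_horizonSemi hp hσ hϑ0 hϑ1 hS hmeas htrace

end Averaging

section Transfer

variable {d : ℕ} {S : Set ℝ} {ϑ p s σ : ℝ} {u : EuclideanSpace ℝ (Fin (d - 1)) → ℝ → ℝ}

theorem setLIntegral_univ_prod_norm_rpow_div (hS : MeasurableSet S)
    (hu : ContinuousOn (fun q : EuclideanSpace ℝ (Fin (d - 1)) × ℝ => u q.1 q.2)
      (Set.univ ×ˢ S)) :
    ∫⁻ q in Set.univ ×ˢ S, ENNReal.ofReal (‖u q.1 q.2‖ ^ p / q.2 ^ σ) =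
      ∫⁻ x' : EuclideanSpace ℝ (Fin (d - 1)), ∫⁻ xd in S,
        ENNReal.ofReal (|u x' xd| ^ p / xd ^ σ) := by
  have hmeas : AEMeasurable (fun q : EuclideanSpace ℝ (Fin (d - 1)) × ℝ =>
      ENNReal.ofReal (‖u q.1 q.2‖ ^ p / q.2 ^ σ)) (volume.restrict (Set.univ ×ˢ S)) := by
    have := (hu.aestronglyMeasurable (μ := volume) (MeasurableSet.univ.prod hS)).aemeasurable
    fun_prop
  rw [Measure.volume_eq_prod] at hmeas ⊢
  rw [setLIntegral_prod _ hmeas, setLIntegral_univ]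
  rfl

theorem horizonSemi_le_stripeSemi (hd : 1 ≤ d) (hS : MeasurableSet S) :
    horizonSemi S ϑ p (p * s) (fun q : EuclideanSpace ℝ (Fin (d - 1)) × ℝ => u q.1 q.2) ≤
      stripeSemi d S ϑ p s u := by
  have hdim : (Module.finrank ℝ (EuclideanSpace ℝ (Fin (d - 1))) : ℝ) + 1 = d := by
    rw [finrank_euclideanSpace_fin]
    exact_mod_cast Nat.sub_add_cancel hd
  simp only [horizonSemi, hdim]
  rw [Measure.volume_eq_prod, ← Measure.prod_restrict, Measure.restrict_univ]
  refine (lintegral_prod_le _).trans ?_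
  refine lintegral_mono fun x' => lintegral_mono fun xd => ?_
  have hslice (y' : EuclideanSpace ℝ (Fin (d - 1))) : MeasurableSet
      (S ∩ {t : ℝ | dist y' x' ^ 2 + (t - xd) ^ 2 < (ϑ * xd) ^ 2}) :=
    hS.inter (isOpen_lt (by fun_prop) continuous_const).measurableSet
  rw [← lintegral_indicator ((MeasurableSet.univ.prod hS).inter
    (isOpen_horizonBall ϑ (x', xd)).measurableSet)]
  refine (lintegral_prod_le _).trans (lintegral_mono fun y' => ?_)
  rw [← lintegral_indicator (hslice y')]
  classical
  refine lintegral_mono fun yd => le_of_eq ?_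
  simp only [Set.indicator_apply, Set.mem_inter_iff, Set.mem_prod, Set.mem_univ, true_and,
    horizonBall, Set.mem_ofPred_eq, Real.norm_eq_abs]

end Transfer

theorem stmt_11_general (d : ℕ) (hd : 1 ≤ d) (p s : ℝ) (hp : 1 ≤ p) (hsp : 1 < s * p) :
    ∃ C : ℝ, 0 < C ∧ ∀ ϑ : ℝ, 0 < ϑ → ϑ ≤ 1 → ∀ S : Set ℝ, IsStripeHeights S →
      ∀ u : EuclideanSpace ℝ (Fin (d - 1)) → ℝ → ℝ,
        ContinuousOn (fun q : EuclideanSpace ℝ (Fin (d - 1)) × ℝ => u q.1 q.2)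
          (Set.univ ×ˢ insert 0 S) →
        (∀ x' : EuclideanSpace ℝ (Fin (d - 1)), u x' 0 = 0) →
        (∫⁻ x' : EuclideanSpace ℝ (Fin (d - 1)), ∫⁻ xd in S,
            ENNReal.ofReal (|u x' xd| ^ p / xd ^ (p * s))) ≤
          ENNReal.ofReal C *
            (ENNReal.ofReal (ϑ ^ (p * s - p)) * stripeSemi d S ϑ p s u) := by
  set m : ℝ≥0∞ := volume (lowerCap (EuclideanSpace ℝ (Fin (d - 1))))
  have hm0 : m ≠ 0 := volume_lowerCap_pos.ne'
  have hm : m ≠ ∞ := volume_lowerCap_lt_top.ne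
  have hσ : 1 < p * s := by rwa [mul_comm]
  have hk : 0 < min ((p * s - 1) / p) 1 / 2 :=
    half_pos (lt_min (div_pos (by linarith) (by linarith)) one_pos)
  refine ⟨m.toReal⁻¹ * (min ((p * s - 1) / p) 1 / 2) ^ (-p),
    mul_pos (inv_pos.2 (ENNReal.toReal_pos hm0 hm)) (Real.rpow_pos_of_pos hk _), ?_⟩
  intro ϑ hϑ0 hϑ1 S hS u hu hzero
  rw [← setLIntegral_univ_prod_norm_rpow_div hS.measurableSet
      (hu.mono (Set.prod_mono_right (Set.subset_insert 0 S))),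
    ENNReal.ofReal_mul (by positivity), ENNReal.ofReal_inv_of_pos (ENNReal.toReal_pos hm0 hm),
    ENNReal.ofReal_toReal hm, mul_assoc, ← ENNReal.mul_le_iff_le_inv hm0 hm]
  exact (volume_lowerCap_mul_lintegral_le_horizonSemi_of_continuousOn hp hσ hϑ0 hϑ1 hS hu
    hzero).trans (by gcongr; exact horizonSemi_le_stripeSemi hd hS.measurableSet)

/-- Nonlocal Hardy-type inequality on the stripe with explicit dependence
`ϑ^{ps-p}` on the horizon parameter; the constant `C` is independent of `ϑ`
and `M`. -/
theorem stmt_11 (d : ℕ) (hd : 2 ≤ d) (p s : ℝ) (hp : 1 ≤ p) (hs0 : 0 < s)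
    (hs1 : s < 1) (hsp : 1 < s * p) :
    ∃ C : ℝ, 0 < C ∧ ∀ (ϑ : ℝ), 0 < ϑ → ϑ ≤ 1 → ∀ (M : ℝ), 0 < M →
      ∀ (u : EuclideanSpace ℝ (Fin (d - 1)) → ℝ → ℝ) (K : NNReal),
        LipschitzOnWith K (fun q : EuclideanSpace ℝ (Fin (d - 1)) × ℝ => u q.1 q.2)
          {q : EuclideanSpace ℝ (Fin (d - 1)) × ℝ | q.2 ∈ Set.Icc 0 M} →
        (∀ x' : EuclideanSpace ℝ (Fin (d - 1)), u x' 0 = 0) →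
        (∫⁻ x' : EuclideanSpace ℝ (Fin (d - 1)), ∫⁻ xd in Set.Ioc (0:ℝ) M,
            ENNReal.ofReal (|u x' xd| ^ p / xd ^ (p * s))) ≤
          ENNReal.ofReal C *
            (ENNReal.ofReal (ϑ ^ (p * s - p)) * stripeSemi d (Set.Ioc 0 M) ϑ p s u +
              ENNReal.ofReal (M ^ (-(p * s))) * stripeLp d (Set.Ioc 0 M) p u) := by
  obtain ⟨C, hC, hardy⟩ := stmt_11_general d (by omega) p s hp hsp
  refine ⟨C, hC, fun ϑ hϑ0 hϑ1 M hM u K hu hzero => ?_⟩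
  refine (hardy ϑ hϑ0 hϑ1 _ (isStripeHeights_Ioc M) u ?_ hzero).trans
    (by gcongr; exact le_self_add)
  rw [Set.Ioc_insert_left hM.le]
  exact hu.continuousOn.mono fun q hq => hq.2
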